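/- Let p be a prime number and let B be a finite-dimensional ℚ_p-algebra with dim_{ℚ_p} B = R. Let 𝒪 ⊆ 𝒪ₘ be two ℤ_p-orders in B. Then for every ε > 0 there exists a constant C > 0 depending only on R and ε (and not on p, B, or the orders) such that C⁻¹ · p^{-ε} · [𝒪ₘ : 𝒪] ≤ [𝒪ₘ^× : 𝒪^×] ≤ C · p^{ε} · [𝒪ₘ : 𝒪], where [𝒪ₘ : 𝒪] denotes the (finite) index as additive groups and [𝒪ₘ^× : 𝒪^×] the index of the unit groups. -/

import Mathlib

/-- A `ℤ_[p]`-order in a finite-dimensional `ℚ_[p]`-algebra `B`: a subring of `B` that is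
stable under scaling by `ℤ_[p]`, finitely generated as a `ℤ_[p]`-module and contains a
`ℚ_[p]`-basis of `B`. -/
def IsZpOrder (p : ℕ) [Fact p.Prime] {B : Type*} [Ring B] [Algebra ℚ_[p] B]
    (O : Subring B) : Prop :=
  (∀ (c : ℤ_[p]) (x : B), x ∈ O → algebraMap ℚ_[p] B (c : ℚ_[p]) * x ∈ O) ∧
  (∃ s : Finset B, (s : Set B) ⊆ (O : Set B) ∧
    ∀ x ∈ O, ∃ c : B → ℤ_[p], x = ∑ b ∈ s, algebraMap ℚ_[p] B (c b) * b) ∧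
  Submodule.span ℚ_[p] (O : Set B) = ⊤

/-- The index `[𝒪ₘ^× : 𝒪^×]` of the unit groups, realised as the number of right cosets:
the cardinality of the quotient of the set of units of `𝒪ₘ` by the relation of differing by
right multiplication by a unit of `𝒪`. -/
noncomputable def unitIndex {B : Type*} [Ring B] (O Om : Subring B) : ℕ :=
  Nat.card (Quot (fun (x y : {x : B // x ∈ Om ∧ ∃ v ∈ Om, x * v = 1 ∧ v * x = 1}) =>
    ∃ γ v : B, γ ∈ O ∧ v ∈ O ∧ γ * v = 1 ∧ v * γ = 1 ∧ (x : B) = (y : B) * γ))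


namespace ZpAux
open Polynomial

section
variable {p : ℕ} [Fact p.Prime] {S : Type*} [Ring S] [Algebra ℤ_[p] S] {d : ℕ}

lemma isUnit_of_det (b : Module.Basis (Fin d) ℤ_[p] S) {x : S} (h : IsUnit (Algebra.leftMulMatrix b x).det) : IsUnit x := by
  have hM := (Matrix.isUnit_iff_isUnit_det _).2 h
  have hf : IsUnit (Algebra.lmul ℤ_[p] S x) := by
    rw [Algebra.leftMulMatrix_apply] at hM
    have := hM.map (LinearMap.toMatrixAlgEquiv b).symm
    convert this
    exact ((LinearMap.toMatrixAlgEquiv b).symm_apply_apply _).symm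
  have hb := (Module.End.isUnit_iff _).1 hf
  obtain ⟨y, hy⟩ := hb.2 1
  have hy' : x * y = 1 := hy
  have h2 : y * x = 1 := by
    apply hb.1
    change x * (y * x) = x * 1
    rw [← mul_assoc, hy', one_mul, mul_one]
  exact ⟨⟨x, y, hy', h2⟩, rfl⟩

lemma isUnit_one_add (b : Module.Basis (Fin d) ℤ_[p] S) (x : S) : IsUnit (1 + (p : S) * x) := by
  apply isUnit_of_det b
  have : (1 + (p : S) * x) = 1 + (p : ℤ_[p]) • x := by
    rw [Algebra.smul_def]; simp
  rw [this, map_add, map_one, map_smul, Matrix.det_one_add_smul]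
  have hp : ∀ z : ℤ_[p], IsUnit (1 + p * z) := by
    intro z
    have hz : (p : ℤ_[p]) * z ∈ nonunits ℤ_[p] := by
      rw [PadicInt.mem_nonunits, PadicInt.norm_lt_one_iff_dvd]
      exact Dvd.intro z rfl
    by_contra hc
    have := IsLocalRing.nonunits_add (a := 1 + (p : ℤ_[p]) * z) (b := -(p * z)) hc (by
      rw [PadicInt.mem_nonunits, norm_neg, ← PadicInt.mem_nonunits]; exact hz)
    simp [nonunits] at this
  convert hp (Matrix.trace (Algebra.leftMulMatrix b x) + (eval (p : ℤ_[p])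
    (1 + (X : ℤ_[p][X]) • ((Algebra.leftMulMatrix b) x).map C).det.divX.divX) * p) using 1
  ring

/-- The additive subgroup `p^m S`. -/
def pS (p : ℕ) (S : Type*) [Ring S] (m : ℕ) : AddSubgroup S :=
  (AddMonoidHom.mulLeft ((p : S) ^ m)).range

lemma mem_pS {p : ℕ} {S : Type*} [Ring S] {m : ℕ} {x : S} : x ∈ pS p S m ↔ ∃ y, (p : S) ^ m * y = x := Iff.rfl

lemma pS_index (b : Module.Basis (Fin d) ℤ_[p] S) (m : ℕ) : (pS p S m).index ≠ 0 ∧ (pS p S m).index ≤ (p ^ m) ^ d := by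
  let f : (Fin d → Fin (p ^ m)) → S ⧸ pS p S m :=
    fun c => QuotientAddGroup.mk (∑ i, ((c i : ℕ) : ℤ_[p]) • b i)
  have hf : Function.Surjective f := by
    intro q
    induction q using QuotientAddGroup.induction_on with
    | H x =>
    have hc : ∀ i, ∃ z, b.repr x i - ((b.repr x i).appr m : ℤ_[p]) = p ^ m * z := fun i => by
      have := PadicInt.appr_spec m (b.repr x i)
      rw [Ideal.mem_span_singleton] at this
      exact this
    choose z hz using hc
    refine ⟨fun i => ⟨(b.repr x i).appr m, PadicInt.appr_lt _ _⟩, ?_⟩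
    apply QuotientAddGroup.eq.2
    refine ⟨∑ i, z i • b i, ?_⟩
    change (p : S) ^ m * _ = _
    have hx : -(∑ i, ((b.repr x i).appr m : ℤ_[p]) • b i) + x =
        -(∑ i, ((b.repr x i).appr m : ℤ_[p]) • b i) + ∑ i, b.repr x i • b i := by
      rw [b.sum_repr x]
    refine Eq.trans ?_ hx.symm
    rw [neg_add_eq_sub, ← Finset.sum_sub_distrib, Finset.mul_sum]
    refine Finset.sum_congr rfl fun i _ => ?_
    rw [← sub_smul, hz, mul_smul, Algebra.smul_def (p ^ m : ℤ_[p])]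
    simp
  have : Finite (S ⧸ pS p S m) := Finite.of_surjective f hf
  refine ⟨AddSubgroup.index_ne_zero_of_finite, ?_⟩
  have := Nat.card_le_card_of_surjective f hf
  simpa [AddSubgroup.index] using this

open Classical in
lemma card_bad (b : Module.Basis (Fin d) ℤ_[p] S) (a : S) (hd : d < p) :
    p - d ≤ ((Finset.range p).filter (fun t : ℕ => IsUnit (a - (t : S)))).card := by
  classical
  let P := (Algebra.leftMulMatrix b a).charpoly
  have hP : P.Monic := Matrix.charpoly_monic _
  let Q := P.map (PadicInt.toZMod (p := p))
  have hQ : Q.Monic := hP.map _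
  have hQd : Q.natDegree = d := by
    rw [hP.natDegree_map]; simp [P, Matrix.charpoly_natDegree_eq_dim]
  have hbad : ((Finset.range p).filter (fun t : ℕ => ¬ IsUnit (a - (t : S)))).card ≤ d := by
    calc _ ≤ Q.roots.toFinset.card := by
          refine Finset.card_le_card_of_injOn (fun t : ℕ => (t : ZMod p)) ?_ ?_
          · intro t ht
            simp only [Finset.coe_filter, Finset.mem_range, Set.mem_ofPred_eq] at ht
            simp only [Finset.mem_coe, Multiset.mem_toFinset, Polynomial.mem_roots hQ.ne_zero]
            by_contra hc
            apply ht.2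
            rw [← IsUnit.neg_iff, neg_sub]
            apply isUnit_of_det b
            have h1 : IsUnit (P.eval (t : ℤ_[p])) := by
              by_contra hu
              apply hc
              have : P.eval (t : ℤ_[p]) ∈ RingHom.ker (PadicInt.toZMod (p := p)) := by
                rw [PadicInt.ker_toZMod]; exact hu
              rw [RingHom.mem_ker] at this
              rw [Polynomial.IsRoot.def, ← this]
              simp only [Q]
              rw [show (t : ZMod p) = PadicInt.toZMod (t : ℤ_[p]) by simp,
                Polynomial.eval_map_apply]
            rw [Matrix.eval_charpoly] at h1
            convert h1 using 2
            rw [map_sub]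
            congr 1
            simp
          · intro t ht s hs h
            simp only [Finset.coe_filter, Finset.mem_range, Set.mem_ofPred_eq] at ht hs
            have := (ZMod.natCast_eq_natCast_iff' _ _ _).1 h
            rwa [Nat.mod_eq_of_lt ht.1, Nat.mod_eq_of_lt hs.1] at this
      _ ≤ Q.natDegree := (Multiset.toFinset_card_le _).trans (Polynomial.card_roots' _)
      _ = d := hQd
  have := Finset.card_filter_add_card_filter_not (s := Finset.range p)
    (fun t : ℕ => IsUnit (a - (t : S)))
  rw [Finset.card_range] at this
  omega

/-- the congruence subgroup of units. -/
def cong (I : AddSubgroup S) (hI : ∀ x, ∀ y ∈ I, x * y ∈ I) : Subgroup Sˣ where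
  carrier := {x | (x : S) - 1 ∈ I}
  one_mem' := by simp
  mul_mem' := by
    intro x y hx hy
    have := I.add_mem (hI x _ hy) hx
    simpa [mul_sub] using this
  inv_mem' := by
    intro x hx
    have := I.neg_mem (hI (↑x⁻¹) _ hx)
    simpa [mul_sub] using this

lemma cong_index (I : AddSubgroup S) (hI : ∀ x, ∀ y ∈ I, x * y ∈ I) :
    (cong I hI).index = Nat.card (Set.range (fun x : Sˣ => (QuotientAddGroup.mk (x : S) : S ⧸ I))) := by
  have key : ∀ x y : Sˣ, x⁻¹ * y ∈ cong I hI ↔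
      (QuotientAddGroup.mk (x : S) : S ⧸ I) = QuotientAddGroup.mk (y : S) := by
    intro x y
    rw [QuotientAddGroup.eq]
    change ((x⁻¹ * y : Sˣ) : S) - 1 ∈ I ↔ _
    constructor
    · intro h
      have := hI x _ h
      simpa [mul_sub, neg_add_eq_sub] using this
    · intro h
      have := hI (↑x⁻¹) _ h
      rw [mul_add, mul_neg, Units.inv_mul, neg_add_eq_sub] at this
      exact this
  rw [Subgroup.index]
  refine Nat.card_congr (Equiv.trans ?_ (Setoid.quotientKerEquivRange _))
  refine Quotient.congr (Equiv.refl _) ?_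
  intro x y
  rw [QuotientGroup.leftRel_apply, key]
  rfl

lemma density (b : Module.Basis (Fin d) ℤ_[p] S) (R : ℕ) (hd : d ≤ R) (I : AddSubgroup S) (hI : ∀ x, ∀ y ∈ I, x * y ∈ I)
    (hIp : I ≤ pS p S 1) (hfin : I.index ≠ 0) :
    (cong I hI).index ≤ I.index ∧ I.index ≤ (R + 1 + R ^ R) * (cong I hI).index ∧
      (cong I hI).index ≠ 0 := by
  classical
  rw [cong_index]
  have : I.FiniteIndex := ⟨hfin⟩
  have : Finite (S ⧸ I) := AddSubgroup.finite_quotient_of_finiteIndex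
  have := Fintype.ofFinite (S ⧸ I)
  set U := Set.range (fun x : Sˣ => (QuotientAddGroup.mk (x : S) : S ⧸ I)) with hU
  have hunit : ∀ x : S, IsUnit x → (QuotientAddGroup.mk x : S ⧸ I) ∈ U := by
    rintro _ ⟨u, rfl⟩; exact ⟨u, rfl⟩
  have hUc : Nat.card U = U.toFinset.card := by
    rw [Nat.card_eq_fintype_card, Set.toFinset_card]
  have hIc : I.index = (Finset.univ : Finset (S ⧸ I)).card := by
    rw [AddSubgroup.index, Nat.card_eq_fintype_card]; rfl
  refine ⟨Nat.card_le_card_of_injective (Subtype.val : U → S ⧸ I) Subtype.val_injective, ?_, ?_⟩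
  swap
  · have : Nonempty U := ⟨⟨_, 1, rfl⟩⟩
    exact Nat.card_pos.ne'
  rw [hUc, hIc]
  have hp := (Fact.out : p.Prime)
  by_cases hpR : R < p
  · have h1 : (Finset.univ : Finset (S ⧸ I)).card * (p - d) ≤ p * U.toFinset.card := by
      calc _ = ∑ g : S ⧸ I, (p - d) := by simp
        _ ≤ ∑ g : S ⧸ I, ∑ t ∈ Finset.range p,
              if g - QuotientAddGroup.mk ((t : ℕ) : S) ∈ U then 1 else 0 := by
            refine Finset.sum_le_sum fun g _ => ?_
            induction g using QuotientAddGroup.induction_on with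
            | H a =>
            refine (card_bad b a (by omega)).trans ?_
            rw [Finset.card_filter]
            refine Finset.sum_le_sum fun t _ => ?_
            split_ifs with h1 h2
            · exact le_rfl
            · exact absurd (hunit _ h1) h2
            · simp
            · simp
        _ = ∑ t ∈ Finset.range p, U.toFinset.card := by
            rw [Finset.sum_comm]
            refine Finset.sum_congr rfl fun t _ => ?_
            rw [← Finset.card_filter]
            refine Finset.card_bij (fun g _ => g - QuotientAddGroup.mk ((t : ℕ) : S)) ?_ ?_ ?_
            · intro g hg; simpa using hg
            · intro g _ h _ hgh; simpa using hgh
            · intro u hu; exact ⟨u + QuotientAddGroup.mk ((t : ℕ) : S), by simpa using hu, by simp⟩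
        _ = _ := by simp
    obtain ⟨k, rfl⟩ : ∃ k, p = d + k + 1 := ⟨p - d - 1, by omega⟩
    have hk : d + k + 1 - d = k + 1 := by omega
    rw [hk] at h1
    have h2 : (d + k + 1) ≤ (R + 1) * (k + 1) := by nlinarith
    have h3 : (Finset.univ : Finset (S ⧸ I)).card * (k + 1) ≤
        ((R + 1) * U.toFinset.card) * (k + 1) := by
      refine h1.trans ((Nat.mul_le_mul_right _ h2).trans (le_of_eq (by ring)))
    have h4 := Nat.le_of_mul_le_mul_right h3 (Nat.succ_pos k)
    refine h4.trans (Nat.mul_le_mul_right _ (by omega))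
  · push Not at hpR
    obtain ⟨hi0, hi⟩ := pS_index b 1
    have : (pS p S 1).FiniteIndex := ⟨hi0⟩
    have : Finite (S ⧸ pS p S 1) := AddSubgroup.finite_quotient_of_finiteIndex
    have := Fintype.ofFinite (S ⧸ pS p S 1)
    let π : S ⧸ I →+ S ⧸ pS p S 1 := QuotientAddGroup.map I (pS p S 1) (AddMonoidHom.id S) hIp
    have h1 := Finset.card_le_mul_card_image (f := π) (Finset.univ : Finset (S ⧸ I))
      U.toFinset.card (by
        intro q hq
        simp only [Finset.mem_image, Finset.mem_univ, true_and] at hq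
        obtain ⟨g0, hg0⟩ := hq
        refine Finset.card_le_card_of_injOn
          (fun g => QuotientAddGroup.mk (1 : S) + (g - g0)) ?_ ?_
        · intro g hg
          simp only [Finset.coe_filter, Finset.mem_univ, true_and, Set.mem_ofPred_eq] at hg
          have hz : π (g - g0) = 0 := by rw [map_sub, hg, hg0, sub_self]
          change QuotientAddGroup.mk (1 : S) + (g - g0) ∈ (U.toFinset : Set _)
          rw [Set.coe_toFinset]
          generalize g - g0 = h at hz ⊢
          induction h using QuotientAddGroup.induction_on with
          | H a =>
          have ha : a ∈ pS p S 1 := (QuotientAddGroup.eq_zero_iff a).1 hz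
          obtain ⟨y, rfl⟩ := mem_pS.1 ha
          have := hunit _ (isUnit_one_add b y)
          rw [← QuotientAddGroup.mk_add, pow_one]
          exact this
        · intro g _ h _ hgh; simpa using hgh)
    have h2 : (Finset.univ.image π).card ≤ R ^ R := by
      refine (Finset.card_le_univ _).trans ?_
      rw [← Nat.card_eq_fintype_card]
      refine hi.trans ?_
      rw [pow_one]
      exact (Nat.pow_le_pow_left hpR d).trans (Nat.pow_le_pow_right (hp.pos.trans_le hpR) hd)
    refine h1.trans ?_
    rw [mul_comm]
    exact Nat.mul_le_mul_right _ (h2.trans (by omega))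
end
end ZpAux
namespace ZpAux

lemma unitIndex_eq {B : Type*} [Ring B] (O Om : Subring B) :
    unitIndex O Om = (O.toSubmonoid.units).relIndex (Om.toSubmonoid.units) := by
  unfold unitIndex
  rw [Subgroup.relIndex, Subgroup.index]
  symm
  let f : Om.toSubmonoid.units → {x : B // x ∈ Om ∧ ∃ v ∈ Om, x * v = 1 ∧ v * x = 1} :=
    fun u => ⟨((u : Bˣ) : B), u.2.1, (((u : Bˣ)⁻¹ : Bˣ) : B), u.2.2, by simp, by simp⟩
  have hf : Function.Bijective f := by
    constructor
    · intro u v h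
      exact Subtype.ext (Units.ext (congrArg Subtype.val h))
    · rintro ⟨x, hx, v, hv, h1, h2⟩
      exact ⟨⟨⟨x, v, h1, h2⟩, hx, hv⟩, rfl⟩
  refine Nat.card_congr (Quot.congr (Equiv.ofBijective f hf) ?_)
  intro x y
  change (QuotientGroup.leftRel _) x y ↔ ∃ γ v : B, γ ∈ O ∧ v ∈ O ∧ γ * v = 1 ∧ v * γ = 1 ∧
    ((x : Bˣ) : B) = ((y : Bˣ) : B) * γ
  rw [QuotientGroup.leftRel_apply, Subgroup.mem_subgroupOf]
  constructor
  · intro h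
    refine ⟨(((y : Bˣ)⁻¹ * x : Bˣ) : B), (((x : Bˣ)⁻¹ * y : Bˣ) : B), ?_, h.1, ?_, ?_, ?_⟩
    · have := h.2
      simpa using this
    · rw [← Units.val_mul]; simp
    · rw [← Units.val_mul]; simp
    · rw [← Units.val_mul]; simp
  · rintro ⟨γ, v, hγ, hv, h1, h2, hxy⟩
    have : (x : Bˣ) = y * ⟨γ, v, h1, h2⟩ := Units.ext hxy
    have h3 : (x : Bˣ)⁻¹ * y = ⟨v, γ, h2, h1⟩ := by
      rw [this, mul_inv_rev, mul_assoc, inv_mul_cancel, mul_one]; rfl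
    change (x : Bˣ)⁻¹ * y ∈ _
    rw [h3]
    exact ⟨hv, hγ⟩

lemma finite_B {p : ℕ} [Fact p.Prime] {B : Type*} [Ring B] [Algebra ℚ_[p] B]
    {O : Subring B} (hO : IsZpOrder p O) : Module.Finite ℚ_[p] B := by
  obtain ⟨_, ⟨s, hs, h⟩, hspan⟩ := hO
  refine ⟨⟨s, ?_⟩⟩
  rw [eq_top_iff, ← hspan, Submodule.span_le]
  intro x hx
  obtain ⟨c, rfl⟩ := h x hx
  refine Submodule.sum_mem _ fun b hb => ?_
  rw [← Algebra.smul_def]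
  exact Submodule.smul_mem _ _ (Submodule.subset_span hb)

lemma exists_basis {p : ℕ} [Fact p.Prime] {B : Type*} [Ring B] [Algebra ℚ_[p] B]
    {O : Subring B} (hO : IsZpOrder p O) :
    ∃ (inst : Algebra ℤ_[p] O) (d : ℕ), d ≤ Module.finrank ℚ_[p] B ∧
      Nonempty (Module.Basis (Fin d) ℤ_[p] O) := by
  have := finite_B hO
  obtain ⟨h1, ⟨s, hs, h⟩, hspan⟩ := hO
  letI : Algebra ℤ_[p] B := Algebra.compHom B (algebraMap ℤ_[p] ℚ_[p])
  have : IsScalarTower ℤ_[p] ℚ_[p] B := IsScalarTower.of_algebraMap_eq fun _ => rfl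
  have hmem : ∀ c : ℤ_[p], algebraMap ℤ_[p] B c ∈ O := fun c => by
    have := h1 c 1 O.one_mem
    rwa [mul_one] at this
  letI : Algebra ℤ_[p] O := RingHom.toAlgebra' ((algebraMap ℤ_[p] B).codRestrict O hmem) (by
    intro c x
    exact Subtype.ext (Algebra.commutes c (x : B)))
  have hsmul : ∀ (c : ℤ_[p]) (x : O), ((c • x : O) : B) = algebraMap ℚ_[p] B (c : ℚ_[p]) * x := by
    intro c x
    rw [Algebra.smul_def]; rfl
  let ι : O →ₗ[ℤ_[p]] B :=
    { toFun := fun x => x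
      map_add' := fun _ _ => rfl
      map_smul' := fun c x => by
        rw [hsmul, RingHom.id_apply, Algebra.smul_def]; rfl }
  have hι : Function.Injective ι := Subtype.val_injective
  have hfin : Module.Finite ℤ_[p] O := by
    classical
    refine ⟨⟨s.attach.image fun b => (⟨b.1, hs b.2⟩ : O), ?_⟩⟩
    rw [eq_top_iff]
    rintro x -
    obtain ⟨c, hc⟩ := h x x.2
    have : x = ∑ b ∈ s.attach, c b.1 • (⟨b.1, hs b.2⟩ : O) := by
      apply hι
      rw [map_sum]
      change (x : B) = ∑ b ∈ s.attach, ((c b.1 • (⟨b.1, hs b.2⟩ : O) : O) : B)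
      simp only [hsmul]
      rw [hc, ← Finset.sum_attach]
    rw [this]
    refine Submodule.sum_mem _ fun b hb => Submodule.smul_mem _ _ (Submodule.subset_span ?_)
    simp only [Finset.coe_image, Set.mem_image]
    exact ⟨b, hb, rfl⟩
  have htfB : Module.IsTorsionFree ℤ_[p] B := Module.IsTorsionFree.trans_faithfulSMul ℤ_[p] ℚ_[p] B
  have htf : Module.IsTorsionFree ℤ_[p] O := hι.moduleIsTorsionFree ι (fun c x => map_smul ι c x)
  have hfree : Module.Free ℤ_[p] O := inferInstance
  let b := Module.finBasis ℤ_[p] O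
  refine ⟨inferInstance, _, ?_, ⟨b⟩⟩
  have hl : LinearIndependent ℤ_[p] (fun i => ι (b i)) :=
    b.linearIndependent.map' ι (LinearMap.ker_eq_bot.2 hι)
  have hl' := (LinearIndependent.iff_fractionRing ℤ_[p] ℚ_[p]).1 hl
  have := hl'.fintype_card_le_finrank
  simpa using this

/-- congruence subgroup in `Bˣ` -/
def congB {B : Type*} [Ring B] (Om : Subring B) (I : AddSubgroup B)
    (hI : ∀ x ∈ Om, ∀ y ∈ I, x * y ∈ I) : Subgroup Bˣ where
  carrier := {x | x ∈ Om.toSubmonoid.units ∧ (x : B) - 1 ∈ I}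
  one_mem' := by simp
  mul_mem' := by
    intro x y hx hy
    refine ⟨mul_mem hx.1 hy.1, ?_⟩
    have := I.add_mem (hI x hx.1.1 _ hy.2) hx.2
    simpa [mul_sub] using this
  inv_mem' := by
    intro x hx
    refine ⟨inv_mem hx.1, ?_⟩
    have := I.neg_mem (hI (↑x⁻¹) hx.1.2 _ hx.2)
    simpa [mul_sub] using this

lemma range_units {B : Type*} [Ring B] (O : Subring B) :
    (Units.map (O.subtype : O →* B)).range = O.toSubmonoid.units := by
  ext x
  constructor
  · rintro ⟨u, rfl⟩
    exact ⟨u.1.2, (u⁻¹).1.2⟩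
  · intro hx
    exact ⟨⟨⟨x, hx.1⟩, ⟨_, hx.2⟩, Subtype.ext (by simp), Subtype.ext (by simp)⟩, Units.ext rfl⟩

lemma range_add {B : Type*} [Ring B] (O : Subring B) :
    (O.subtype : O →+ B).range = O.toAddSubgroup := by
  ext x
  exact ⟨by rintro ⟨u, rfl⟩; exact u.2, fun hx => ⟨⟨x, hx⟩, rfl⟩⟩

lemma densityB {p : ℕ} [Fact p.Prime] {B : Type*} [Ring B] [Algebra ℚ_[p] B]
    {O Om : Subring B} (hO : IsZpOrder p O) (hle : O ≤ Om) (R : ℕ)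
    (hR : Module.finrank ℚ_[p] B = R) (I : AddSubgroup B)
    (hI : ∀ x ∈ Om, ∀ y ∈ I, x * y ∈ I) (hIp : ∀ x ∈ I, ∃ y ∈ O, (p : B) * y = x)
    (hfin : I.relIndex O.toAddSubgroup ≠ 0) :
    (congB Om I hI).relIndex O.toSubmonoid.units ≤ I.relIndex O.toAddSubgroup ∧
    I.relIndex O.toAddSubgroup ≤
      (R + 1 + R ^ R) * (congB Om I hI).relIndex O.toSubmonoid.units ∧
    (congB Om I hI).relIndex O.toSubmonoid.units ≠ 0 ∧
    congB Om I hI ≤ O.toSubmonoid.units := by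
  obtain ⟨inst, d, hd, ⟨b⟩⟩ := exists_basis hO
  rw [hR] at hd
  let J : AddSubgroup O := I.comap (O.subtype : O →+ B)
  have hJ : ∀ x, ∀ y ∈ J, x * y ∈ J := fun x y hy => hI x (hle x.2) y hy
  have e1 : I.relIndex O.toAddSubgroup = J.index := by
    rw [AddSubgroup.index_comap, range_add]
  have e2 : (congB Om I hI).relIndex O.toSubmonoid.units = (cong J hJ).index := by
    rw [← range_units, ← Subgroup.index_comap]
    congr 1
    ext u
    constructor
    · intro h; exact h.2
    · intro h
      exact ⟨⟨hle u.1.2, hle (u⁻¹).1.2⟩, h⟩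
  rw [e1] at hfin
  have hJp : J ≤ pS p O 1 := by
    intro x hx
    obtain ⟨y, hy, hxy⟩ := hIp x hx
    exact mem_pS.2 ⟨⟨y, hy⟩, Subtype.ext (by simpa using hxy)⟩
  have key := density b R hd J hJ hJp hfin
  rw [e1, e2]
  refine ⟨key.1, key.2.1, key.2.2, ?_⟩
  intro x hx
  obtain ⟨y, hy, hxy⟩ := hIp _ hx.2
  obtain ⟨u, hu⟩ := isUnit_one_add b (⟨y, hy⟩ : O)
  rw [← range_units]
  refine ⟨u, Units.ext ?_⟩
  change ((u : O) : B) = x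
  rw [hu]
  simp [hxy]

lemma exists_pow {p : ℕ} [Fact p.Prime] {B : Type*} [Ring B] [Algebra ℚ_[p] B]
    {O : Subring B} (hO : IsZpOrder p O) (x : B) : ∃ k : ℕ, (p : B) ^ k * x ∈ O := by
  have hx : x ∈ Submodule.span ℚ_[p] (O : Set B) := by rw [hO.2.2]; trivial
  have hpO : ∀ k : ℕ, (p : B) ^ k ∈ O := fun k => O.pow_mem (natCast_mem O p) k
  induction hx using Submodule.span_induction with
  | mem x h => exact ⟨0, by simpa using h⟩
  | zero => exact ⟨0, by simp⟩
  | add x y _ _ hx hy =>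
    obtain ⟨k, hk⟩ := hx
    obtain ⟨l, hl⟩ := hy
    refine ⟨k + l, ?_⟩
    rw [mul_add]
    refine O.add_mem ?_ ?_
    · rw [add_comm k l, pow_add, mul_assoc]; exact O.mul_mem (hpO _) hk
    · rw [pow_add, mul_assoc]; exact O.mul_mem (hpO _) hl
  | smul q x _ hx =>
    obtain ⟨k, hk⟩ := hx
    obtain ⟨l, c, hc⟩ : ∃ (l : ℕ) (c : ℤ_[p]), (c : ℚ_[p]) = (p : ℚ_[p]) ^ l * q := by
      have hp1 : (1 : ℝ) < p := by exact_mod_cast (Fact.out : p.Prime).one_lt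
      obtain ⟨l, hl⟩ := pow_unbounded_of_one_lt ‖q‖ hp1
      refine ⟨l, ⟨(p : ℚ_[p]) ^ l * q, ?_⟩, rfl⟩
      rw [norm_mul, norm_pow, Padic.norm_p, inv_pow, inv_mul_le_iff₀ (by positivity)]
      linarith
    refine ⟨l + k, ?_⟩
    have := hO.1 c _ hk
    rw [hc] at this
    convert this using 1
    rw [map_mul, map_pow, map_natCast, Algebra.smul_def, pow_add, mul_assoc, mul_assoc,
      ← mul_assoc ((p : B) ^ k), ← mul_assoc _ ((p : B) ^ k), 
      ((Nat.cast_commute p (algebraMap ℚ_[p] B q)).pow_left k).eq]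

lemma exists_pow_all {p : ℕ} [Fact p.Prime] {B : Type*} [Ring B] [Algebra ℚ_[p] B]
    {O Om : Subring B} (hO : IsZpOrder p O) (hOm : IsZpOrder p Om) :
    ∃ k : ℕ, ∀ x ∈ Om, (p : B) ^ k * x ∈ O := by
  choose k hk using exists_pow hO
  obtain ⟨-, ⟨s, hs, h⟩, -⟩ := hOm
  refine ⟨∑ b ∈ s, k b, fun x hx => ?_⟩
  obtain ⟨c, rfl⟩ := h x hx
  rw [Finset.mul_sum]
  refine O.sum_mem fun b hb => ?_
  obtain ⟨l, hl⟩ := Nat.exists_eq_add_of_le' (Finset.single_le_sum (fun i _ => Nat.zero_le (k i)) hb)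
  rw [← mul_assoc, ((Nat.cast_commute p (algebraMap ℚ_[p] B (c b))).pow_left _).eq, mul_assoc]
  apply hO.1
  rw [hl, pow_add, mul_assoc]
  exact O.mul_mem (O.pow_mem (natCast_mem O p) _) (hk b)

lemma main {p : ℕ} [Fact p.Prime] {B : Type*} [Ring B] [Algebra ℚ_[p] B] (R : ℕ)
    (hR : Module.finrank ℚ_[p] B = R) {O Om : Subring B} (hO : IsZpOrder p O)
    (hOm : IsZpOrder p Om) (hle : O ≤ Om) :
    O.toAddSubgroup.relIndex Om.toAddSubgroup ≤ (R + 1 + R ^ R) * unitIndex O Om ∧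
    unitIndex O Om ≤ (R + 1 + R ^ R) * O.toAddSubgroup.relIndex Om.toAddSubgroup := by
  obtain ⟨k, hk⟩ := exists_pow_all hO hOm
  let I : AddSubgroup B := Om.toAddSubgroup.map (AddMonoidHom.mulLeft ((p : B) ^ (k + 1)))
  have hmemI : ∀ x, x ∈ I ↔ ∃ y ∈ Om, (p : B) ^ (k + 1) * y = x := fun x => Iff.rfl
  have hI : ∀ x ∈ Om, ∀ y ∈ I, x * y ∈ I := by
    intro x hx y hy
    obtain ⟨z, hz, rfl⟩ := (hmemI y).1 hy
    refine (hmemI _).2 ⟨x * z, Om.mul_mem hx hz, ?_⟩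
    rw [← mul_assoc, ← mul_assoc, ((Nat.cast_commute p x).pow_left _).eq]
  have hdivSmall : ∀ x ∈ I, ∃ y ∈ O, (p : B) * y = x := by
    intro x hx
    obtain ⟨z, hz, rfl⟩ := (hmemI x).1 hx
    exact ⟨_, hk z hz, by rw [pow_succ', mul_assoc]⟩
  have hdivBig : ∀ x ∈ I, ∃ y ∈ Om, (p : B) * y = x := fun x hx =>
    let ⟨y, hy, h⟩ := hdivSmall x hx
    ⟨y, hle hy, h⟩
  have hIle : I ≤ O.toAddSubgroup := by
    intro x hx
    obtain ⟨y, hy, rfl⟩ := hdivSmall x hx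
    exact O.mul_mem (natCast_mem O p) hy
  have hleA : O.toAddSubgroup ≤ Om.toAddSubgroup := hle
  have hfin : I.relIndex Om.toAddSubgroup ≠ 0 := by
    obtain ⟨inst, d, hd, ⟨b⟩⟩ := exists_basis hOm
    have := (pS_index b (k + 1)).1
    rw [← range_add, ← AddSubgroup.index_comap]
    convert this
    ext x
    constructor
    · intro h
      obtain ⟨y, hy, hxy⟩ := (hmemI _).1 h
      exact mem_pS.2 ⟨⟨y, hy⟩, Subtype.ext (by simpa using hxy)⟩
    · intro h
      obtain ⟨y, rfl⟩ := mem_pS.1 h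
      exact (hmemI _).2 ⟨y, y.2, by simp⟩
  have hmulA := AddSubgroup.relIndex_mul_relIndex I _ _ hIle hleA
  have hfin' : I.relIndex O.toAddSubgroup ≠ 0 := by
    intro h; rw [h, zero_mul] at hmulA; exact hfin hmulA.symm
  obtain ⟨a1, a2, a3, a4⟩ := densityB hO hle R hR I hI hdivSmall hfin'
  obtain ⟨b1, b2, b3, -⟩ := densityB hOm le_rfl R hR I hI hdivBig hfin
  have hmulU := Subgroup.relIndex_mul_relIndex (congB Om I hI) O.toSubmonoid.units
    Om.toSubmonoid.units a4 (fun x hx => ⟨hle hx.1, hle hx.2⟩)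
  rw [← unitIndex_eq] at hmulU
  generalize O.toAddSubgroup.relIndex Om.toAddSubgroup = N at *
  generalize unitIndex O Om = q at *
  generalize I.relIndex Om.toAddSubgroup = a at *
  generalize I.relIndex O.toAddSubgroup = b at *
  generalize (congB Om I hI).relIndex O.toSubmonoid.units = v at *
  generalize (congB Om I hI).relIndex Om.toSubmonoid.units = u at *
  generalize R + 1 + R ^ R = C at *
  subst hmulA hmulU
  constructor
  · refine Nat.le_of_mul_le_mul_left ?_ (Nat.pos_of_ne_zero hfin')
    calc b * N ≤ C * (v * q) := b2
      _ = v * (C * q) := by ring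
      _ ≤ b * (C * q) := Nat.mul_le_mul_right _ a1
  · refine Nat.le_of_mul_le_mul_left ?_ (Nat.pos_of_ne_zero a3)
    calc v * q ≤ b * N := b1
      _ ≤ C * v * N := Nat.mul_le_mul_right _ a2
      _ = v * (C * N) := by ring

end ZpAux

/-- For every `R` and `ε > 0` there is `C > 0`, depending only on `R, ε`
(and not on `p`, `B` or the orders), such that for all `ℤ_[p]`-orders `𝒪 ⊆ 𝒪ₘ` in an
`R`-dimensional `ℚ_[p]`-algebra `B`,
`C⁻¹ · p^(-ε) · [𝒪ₘ : 𝒪] ≤ [𝒪ₘ^× : 𝒪^×] ≤ C · p^ε · [𝒪ₘ : 𝒪]`. -/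
theorem stmt2 (R : ℕ) (ε : ℝ) (hε : 0 < ε) :
    ∃ C : ℝ, 0 < C ∧
      ∀ (p : ℕ) [Fact p.Prime] (B : Type) [Ring B] [Algebra ℚ_[p] B],
        Module.finrank ℚ_[p] B = R →
        ∀ O Om : Subring B, IsZpOrder p O → IsZpOrder p Om → O ≤ Om →
        C⁻¹ * (p : ℝ) ^ (-ε) * (O.toAddSubgroup.relIndex Om.toAddSubgroup : ℝ) ≤
            (unitIndex O Om : ℝ) ∧
          (unitIndex O Om : ℝ) ≤
            C * (p : ℝ) ^ ε * (O.toAddSubgroup.relIndex Om.toAddSubgroup : ℝ) := by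
  refine ⟨((R + 1 + R ^ R : ℕ) : ℝ), by positivity, ?_⟩
  intro p _ B _ _ hR O Om hO hOm hle
  obtain ⟨h1, h2⟩ := ZpAux.main R hR hO hOm hle
  have hC : (0 : ℝ) < ((R + 1 + R ^ R : ℕ) : ℝ) := by positivity
  have h1' : (O.toAddSubgroup.relIndex Om.toAddSubgroup : ℝ) ≤
      ((R + 1 + R ^ R : ℕ) : ℝ) * (unitIndex O Om : ℝ) := by exact_mod_cast h1
  have h2' : (unitIndex O Om : ℝ) ≤ ((R + 1 + R ^ R : ℕ) : ℝ) *
      (O.toAddSubgroup.relIndex Om.toAddSubgroup : ℝ) := by exact_mod_cast h2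
  generalize ((R + 1 + R ^ R : ℕ) : ℝ) = C at *
  have hp1 : (1 : ℝ) ≤ p := by exact_mod_cast (Fact.out : p.Prime).one_lt.le
  have hpe : (1 : ℝ) ≤ (p : ℝ) ^ ε := Real.one_le_rpow hp1 hε.le
  have hpe' : (p : ℝ) ^ (-ε) ≤ 1 := Real.rpow_le_one_of_one_le_of_nonpos hp1 (by linarith)
  generalize (O.toAddSubgroup.relIndex Om.toAddSubgroup) = N at *
  constructor
  · calc C⁻¹ * (p : ℝ) ^ (-ε) * N ≤ C⁻¹ * 1 * N := by gcongr
      _ = C⁻¹ * N := by ring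
      _ ≤ _ := by rw [inv_mul_le_iff₀ hC]; exact h1'
  · refine h2'.trans ?_
    have : C * 1 * N ≤ C * (p : ℝ) ^ ε * N := by gcongr
    simpa using this
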